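/- Let L, s and k be positive integers with L ≥ 3s+3 and s+1 ≤ k ≤ 2s+1. Then for every integer N ≥ κ''(s), the number of partitions of N lying in I_{L,s,k} is strictly greater than the number of partitions of N lying in D_{L,s}. -/

import Mathlib

/-- `D_{L,s}`: nonempty partitions with all parts in `{s+1, ..., L+s}`. -/
def InD (L s : ℕ) {N : ℕ} (p : N.Partition) : Prop :=
  p.parts ≠ 0 ∧ ∀ x ∈ p.parts, s + 1 ≤ x ∧ x ≤ L + s

/-- `I_{L,s,k}`: partitions with smallest part `s`, all parts `≤ L+s`, and no part equal to `k`. -/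
def InI (L s k : ℕ) {N : ℕ} (p : N.Partition) : Prop :=
  s ∈ p.parts ∧ (∀ x ∈ p.parts, s ≤ x ∧ x ≤ L + s) ∧ k ∉ p.parts

/-- `F''(s) = (120s(s+1)−2)(180s(s+1)−3)+420s(s+1)`. -/
def Fs'' (s : ℕ) : ℕ :=
  (120 * s * (s + 1) - 2) * (180 * s * (s + 1) - 3) + 420 * s * (s + 1)

/-- `κ''(s) = (300s(s+1)−1)((s+1)+(s+2)+⋯+(F''(s)−1))+1`. -/
def kappa'' (s : ℕ) : ℕ :=
  (300 * s * (s + 1) - 1) * (∑ i ∈ Finset.Icc (s + 1) (Fs'' s - 1), i) + 1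

/-!
Let `A` be the set `{s + 1, …, L + s}` without `k`, with generating series
`P_A = ∏_{i ∈ A} 1 / (1 - X ^ i)`. The difference of the two counts is at least the coefficient of
`X ^ N` in `(1 / (1 - X ^ s) - 1 - 1 / (1 - X ^ k)) * P_A`. Pull out of `P_A` the factors of three
elements `a`, `a + 1`, `c` of `A` that are at most `s + 4`. Together with the bracket they form a
series `H` whose coefficients grow at least like a cubic with leading coefficient proportional to
`1 / s - 1 / (s + 1)`: they are bounded below by some `-B` and exceed `B * v` for all `v ≥ V`, where
`V` is of order `s ^ 5`.

It remains to see that `∑ H_v * p_R(N - v)` is positive, `p_R` counting partitions into the other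
parts. If `v < V` and `N ≥ V ^ 2 + V`, a partition of `N - v` has a part `i` whose copies together
weigh at least `V`. Removing just enough of these copies to take off at least `V` gives
`∑_{v < V} p_R(N - v) ≤ ∑_{v ≥ V} v * p_R(N - v)`, so the positive tail outweighs the rest.
-/

open Finset PowerSeries

section Counting

variable {A : Finset ℕ} {i n m V N : ℕ}

/-- The number of partitions of `n` all of whose parts lie in `A`. -/
def partitionCount (A : Finset ℕ) (n : ℕ) : ℕ :=
  #(Nat.Partition.restricted n (· ∈ A))

lemma partitionCount_zero (A : Finset ℕ) : partitionCount A 0 = 1 := by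
  simp [partitionCount, Nat.Partition.restricted]

lemma card_restricted_filter_le_count (hi : 0 < i) (hiA : i ∈ A) (hn : i * m ≤ n) :
    #{p ∈ Nat.Partition.restricted n (· ∈ A) | m ≤ p.parts.count i} =
      partitionCount A (n - i * m) := by
  have cancel {p : n.Partition} (hp : m ≤ p.parts.count i) :
      p.parts - Multiset.replicate m i + Multiset.replicate m i = p.parts :=
    tsub_add_cancel_of_le (Multiset.le_count_iff_replicate_le.mp hp)
  have sum_remove {p : n.Partition} (hp : m ≤ p.parts.count i) :
      (p.parts - Multiset.replicate m i).sum = n - i * m := by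
    have h := congrArg Multiset.sum (cancel hp)
    rw [Multiset.sum_add, Multiset.sum_replicate, p.parts_sum, smul_eq_mul, mul_comm] at h
    omega
  have mem_of_mem_add {q : (n - i * m).Partition} {x : ℕ}
      (hx : x ∈ q.parts + Multiset.replicate m i) : x ∈ q.parts ∨ x = i :=
    (Multiset.mem_add.mp hx).imp_right Multiset.eq_of_mem_replicate
  refine card_bij'
    (fun p hp ↦ ⟨p.parts - Multiset.replicate m i,
      fun hx ↦ p.parts_pos (Multiset.mem_of_le tsub_le_self hx),
      sum_remove (mem_filter.mp hp).2⟩)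
    (fun q _ ↦ ⟨q.parts + Multiset.replicate m i,
      fun hx ↦ (mem_of_mem_add hx).elim q.parts_pos (· ▸ hi),
      by rw [Multiset.sum_add, q.parts_sum, Multiset.sum_replicate, smul_eq_mul, mul_comm m,
        Nat.sub_add_cancel hn]⟩)
    ?_ ?_ ?_ ?_
  · intro p hp
    simp only [Nat.Partition.restricted, mem_filter, mem_univ, true_and] at hp ⊢
    exact fun x hx ↦ hp.1 x (Multiset.mem_of_le tsub_le_self hx)
  · intro q hq
    simp only [Nat.Partition.restricted, mem_filter, mem_univ, true_and] at hq ⊢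
    exact ⟨fun x hx ↦ (mem_of_mem_add hx).elim (hq x) (· ▸ hiA), by simp⟩
  · exact fun p hp ↦ Nat.Partition.ext (cancel (mem_filter.mp hp).2)
  · exact fun q _ ↦ Nat.Partition.ext (add_tsub_cancel_right _ _)

lemma partitionCount_insert (hiA : i ∉ A) (n : ℕ) :
    partitionCount (insert i A) n = partitionCount A n +
      #{p ∈ Nat.Partition.restricted n (· ∈ insert i A) | i ∈ p.parts} := by
  rw [partitionCount, ← card_filter_add_card_filter_not (fun p ↦ i ∈ p.parts), add_comm]
  congr 2
  ext p
  simp only [Nat.Partition.restricted, mem_filter, mem_univ, true_and, mem_insert]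
  grind

lemma partitionCount_insert_eq_add_ite (hi : 0 < i) (hiA : i ∉ A) (n : ℕ) :
    partitionCount (insert i A) n =
      partitionCount A n + if i ≤ n then partitionCount (insert i A) (n - i) else 0 := by
  rw [partitionCount_insert hiA]
  congr 1
  split_ifs with hin
  · simpa only [mul_one, Multiset.one_le_count_iff_mem] using
      card_restricted_filter_le_count (m := 1) hi (mem_insert_self i A) (by rwa [mul_one])
  · exact card_eq_zero.mpr <| filter_eq_empty_iff.mpr
      fun p _ hip ↦ hin (Nat.Partition.le_of_mem_parts hip)

lemma exists_mem_parts_le_mul_count (hV : 0 < V) (hm : V * V ≤ m) (p : m.Partition) :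
    ∃ i ∈ p.parts, V ≤ i * p.parts.count i := by
  by_contra! light
  have parts_lt : p.parts.toFinset ⊆ range V := fun i hi ↦ by
    rw [Multiset.mem_toFinset] at hi
    exact mem_range.mpr <| (Nat.le_mul_of_pos_right i (Multiset.count_pos.mpr hi)).trans_lt
      (light i hi)
  refine hm.not_gt ?_
  calc m = p.parts.sum := p.parts_sum.symm
    _ = ∑ i ∈ p.parts.toFinset, p.parts.count i * i := by
        rw [sum_multiset_count]; simp only [smul_eq_mul]
    _ ≤ #p.parts.toFinset * (V - 1) := by
        rw [← smul_eq_mul]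
        refine sum_le_card_nsmul _ _ _ fun i hi ↦ ?_
        rw [mul_comm]
        exact Nat.le_sub_one_of_lt (light i (Multiset.mem_toFinset.mp hi))
    _ ≤ V * (V - 1) := Nat.mul_le_mul_right _ ((card_le_card parts_lt).trans_eq (card_range V))
    _ < V * V := Nat.mul_lt_mul_of_pos_left (by omega) hV

lemma pos_of_mem_of_zero_notMem (hA : 0 ∉ A) (hi : i ∈ A) : 0 < i :=
  Nat.pos_of_ne_zero (ne_of_mem_of_not_mem hi hA)

/- Some part `i` of the partition has copies of total weight at least `V`; remove just enough of
them to take off at least `V`. -/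
lemma partitionCount_le_sum_sub_ceilDiv (hA : 0 ∉ A) (hV : 0 < V) (hm : V * V ≤ m) :
    partitionCount A m ≤
      ∑ i ∈ A with i * (V ⌈/⌉ i) ≤ m, partitionCount A (m - i * (V ⌈/⌉ i)) := by
  calc partitionCount A m
      ≤ #({i ∈ A | i * (V ⌈/⌉ i) ≤ m}.biUnion fun i ↦
          {p ∈ Nat.Partition.restricted m (· ∈ A) | V ⌈/⌉ i ≤ p.parts.count i}) := by
        refine card_le_card fun p hp ↦ ?_
        obtain ⟨i, hip, heavy⟩ := exists_mem_parts_le_mul_count hV hm p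
        have enough : V ⌈/⌉ i ≤ p.parts.count i :=
          (ceilDiv_le_iff_le_mul (p.parts_pos hip)).mpr heavy
        have weight_le : i * p.parts.count i ≤ m := by
          obtain ⟨rest, split⟩ := Multiset.le_iff_exists_add.mp
            (Multiset.le_count_iff_replicate_le.mp (le_refl (p.parts.count i)))
          have h := congrArg Multiset.sum split
          rw [Multiset.sum_add, Multiset.sum_replicate, p.parts_sum, smul_eq_mul, mul_comm] at h
          omega
        simp only [mem_biUnion, mem_filter]
        exact ⟨i, ⟨(mem_filter.mp hp).2 i hip, (Nat.mul_le_mul_left i enough).trans weight_le⟩,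
          hp, enough⟩
    _ ≤ _ := card_biUnion_le
    _ = _ := sum_congr rfl fun i hi ↦ by
        rw [mem_filter] at hi
        exact card_restricted_filter_le_count (pos_of_mem_of_zero_notMem hA hi.1) hi.1 hi.2

lemma sum_range_add_le_sum_Icc {w : ℕ} (f : ℕ → ℕ) (hVw : V ≤ w) (hiw : i ≤ w) :
    ∑ v ∈ range V with v + w ≤ N, f (v + w) ≤ ∑ u ∈ Icc V N with i ≤ u, f u := by
  refine (sum_map _ (addRightEmbedding w) f).symm.trans_le ?_
  refine sum_le_sum_of_subset fun u hu ↦ ?_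
  simp only [mem_map, mem_filter, mem_range, addRightEmbedding_apply, mem_Icc] at hu ⊢
  omega

lemma sum_range_partitionCount_le (hA : 0 ∉ A) (hV : 0 < V) (hN : V * V + V ≤ N) :
    ∑ v ∈ range V, partitionCount A (N - v) ≤ ∑ u ∈ Icc V N, u * partitionCount A (N - u) := by
  calc ∑ v ∈ range V, partitionCount A (N - v)
      ≤ ∑ v ∈ range V, ∑ i ∈ A with v + i * (V ⌈/⌉ i) ≤ N,
          partitionCount A (N - (v + i * (V ⌈/⌉ i))) := by
        refine sum_le_sum fun v hv ↦ ?_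
        rw [mem_range] at hv
        have key := partitionCount_le_sum_sub_ceilDiv hA hV (show V * V ≤ N - v by omega)
        simpa only [Nat.le_sub_iff_add_le' (show v ≤ N by omega), Nat.sub_sub] using key
    _ = ∑ i ∈ A, ∑ v ∈ range V with v + i * (V ⌈/⌉ i) ≤ N,
          partitionCount A (N - (v + i * (V ⌈/⌉ i))) := by
        simp only [sum_filter]
        exact sum_comm
    _ ≤ ∑ i ∈ A, ∑ u ∈ Icc V N with i ≤ u, partitionCount A (N - u) := by
        refine sum_le_sum fun i hi ↦ ?_
        have V_le : V ≤ i * (V ⌈/⌉ i) := le_smul_ceilDiv (pos_of_mem_of_zero_notMem hA hi)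
        exact sum_range_add_le_sum_Icc (fun u ↦ partitionCount A (N - u)) V_le <|
          Nat.le_mul_of_pos_right i (Nat.pos_of_mul_pos_left (hV.trans_le V_le))
    _ = ∑ u ∈ Icc V N, #{i ∈ A | i ≤ u} * partitionCount A (N - u) := by
        simp only [sum_filter, card_filter, sum_mul, ite_mul, one_mul, zero_mul]
        exact sum_comm
    _ ≤ ∑ u ∈ Icc V N, u * partitionCount A (N - u) := by
        refine sum_le_sum fun u _ ↦ Nat.mul_le_mul_right _ ?_
        calc #{i ∈ A | i ≤ u} ≤ #(Icc 1 u) := card_le_card fun i hi ↦ by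
              rw [mem_filter] at hi
              exact mem_Icc.mpr ⟨pos_of_mem_of_zero_notMem hA hi.1, hi.2⟩
          _ = u := by simp

end Counting

section Series

variable {A : Finset ℕ} {c i V N : ℕ}

/-- The generating series `∑ₙ p_A(n) Xⁿ` of the partitions with parts in `A`. -/
def partitionSeries (A : Finset ℕ) : ℚ⟦X⟧ :=
  PowerSeries.mk fun n ↦ (partitionCount A n : ℚ)

lemma coeff_partitionSeries (A : Finset ℕ) (n : ℕ) :
    coeff n (partitionSeries A) = partitionCount A n :=
  coeff_mk _ _

lemma coeff_mul_partitionSeries_pos (hA : 0 ∉ A) (hV : 0 < V) (hN : V * V + V ≤ N)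
    {f : ℚ⟦X⟧} {B : ℚ} (hB : 0 ≤ B) (lower : ∀ v, -B ≤ coeff v f)
    (growth : ∀ v, V ≤ v → B * v < coeff v f) :
    0 < coeff N (f * partitionSeries A) := by
  have hVN : V ≤ N := le_of_add_le_right hN
  have heavy : (∑ v ∈ range V, (partitionCount A (N - v) : ℚ)) ≤
      ∑ v ∈ Icc V N, (v * partitionCount A (N - v) : ℚ) := by
    exact_mod_cast sum_range_partitionCount_le hA hV hN
  have head : -(B * ∑ v ∈ range V, (partitionCount A (N - v) : ℚ)) ≤
      ∑ v ∈ range V, coeff v f * (partitionCount A (N - v) : ℚ) := by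
    rw [mul_sum, ← sum_neg_distrib]
    refine sum_le_sum fun v _ ↦ ?_
    rw [← neg_mul]
    exact mul_le_mul_of_nonneg_right (lower v) (Nat.cast_nonneg _)
  have tail : B * ∑ v ∈ Icc V N, (v * partitionCount A (N - v) : ℚ) <
      ∑ v ∈ Icc V N, coeff v f * (partitionCount A (N - v) : ℚ) := by
    rw [mul_sum]
    simp only [← mul_assoc]
    refine sum_lt_sum (fun v hv ↦ mul_le_mul_of_nonneg_right
      (growth v (mem_Icc.mp hv).1).le (Nat.cast_nonneg _)) ⟨N, by simpa using hVN, ?_⟩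
    simpa [partitionCount_zero] using growth N hVN
  calc 0 < ∑ v ∈ range V, coeff v f * (partitionCount A (N - v) : ℚ) +
        ∑ v ∈ Icc V N, coeff v f * (partitionCount A (N - v) : ℚ) := by
        linarith [mul_le_mul_of_nonneg_left heavy hB]
    _ = ∑ v ∈ range (N + 1), coeff v f * (partitionCount A (N - v) : ℚ) := by
        rw [← sum_range_add_sum_Ico _ (show V ≤ N + 1 by omega)]
        rfl
    _ = coeff N (f * partitionSeries A) := by
        simp only [coeff_mul, Nat.sum_antidiagonal_eq_sum_range_succ_mk, coeff_partitionSeries]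

/-- The geometric series `∑ⱼ X^(c j) = 1 / (1 - X^c)`, for `c > 0`. -/
noncomputable def geomSeries (c : ℕ) : ℚ⟦X⟧ :=
  (1 - X ^ c)⁻¹

lemma one_sub_X_pow_mul_geomSeries (hc : 0 < c) : (1 - X ^ c) * geomSeries c = 1 :=
  PowerSeries.mul_inv_cancel _ (by simp [hc.ne'])

lemma eq_geomSeries_mul (hc : 0 < c) {f g : ℚ⟦X⟧} (h : (1 - X ^ c) * g = f) :
    g = geomSeries c * f := by
  rw [← h, ← mul_assoc, mul_comm (geomSeries c), one_sub_X_pow_mul_geomSeries hc, one_mul]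

lemma coeff_geomSeries_mul (hc : 0 < c) (n : ℕ) (f : ℚ⟦X⟧) :
    coeff n (geomSeries c * f) =
      coeff n f + if c ≤ n then coeff (n - c) (geomSeries c * f) else 0 := by
  have h : geomSeries c * f = f + X ^ c * (geomSeries c * f) := by
    linear_combination f * one_sub_X_pow_mul_geomSeries hc
  conv_lhs => rw [h, map_add, coeff_X_pow_mul']

lemma partitionSeries_insert (hi : 0 < i) (hiA : i ∉ A) :
    partitionSeries (insert i A) = geomSeries i * partitionSeries A := by
  refine eq_geomSeries_mul hi (PowerSeries.ext fun n ↦ ?_)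
  rw [sub_mul, one_mul, map_sub, coeff_X_pow_mul', sub_eq_iff_eq_add]
  simp only [coeff_partitionSeries]
  exact_mod_cast partitionCount_insert_eq_add_ite hi hiA n

lemma partitionSeries_eq_geomSeries_mul_erase (hi : 0 < i) (hiA : i ∈ A) :
    partitionSeries A = geomSeries i * partitionSeries (A.erase i) := by
  rw [← partitionSeries_insert hi (notMem_erase i A), insert_erase hiA]

end Series

section Growth

variable {a b c k d : ℕ} {M Y : ℚ} {U : ℕ → ℚ} {f : ℚ⟦X⟧}

lemma coeff_geomSeries_mul_le (hc : 0 < c) (hck : c ≤ k) (U_mono : Monotone U) (U_zero : 0 ≤ U 0)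
    (hf : ∀ n, coeff n f ≤ U (n + c) - U n) (n : ℕ) :
    coeff n (geomSeries k * f) ≤ U (n + c) := by
  induction n using Nat.strong_induction_on with
  | _ n ih =>
    rw [coeff_geomSeries_mul (hc.trans_le hck)]
    split_ifs with hkn
    · have previous : coeff (n - k) (geomSeries k * f) ≤ U n :=
        (ih (n - k) (by omega)).trans (U_mono (by omega))
      linarith [hf n]
    · linarith [hf n, U_mono (Nat.zero_le n)]

lemma le_coeff_geomSeries_mul (hc : 0 < c) (hf : ∀ n < c, U n ≤ coeff n f)
    (hf' : ∀ n, U (n + c) - U n ≤ coeff (n + c) f) (n : ℕ) :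
    U n ≤ coeff n (geomSeries c * f) := by
  induction n using Nat.strong_induction_on with
  | _ n ih =>
    rw [coeff_geomSeries_mul hc]
    split_ifs with hcn
    · obtain ⟨m, rfl⟩ := Nat.exists_eq_add_of_le' hcn
      rw [Nat.add_sub_cancel]
      linarith [ih m (by omega), hf' m]
    · simpa using hf n (by omega)

lemma coeff_geomSeries (hc : 0 < c) (n : ℕ) :
    coeff n (geomSeries c) = if c ∣ n then 1 else 0 := by
  induction n using Nat.strong_induction_on with
  | _ n ih =>
    have step := coeff_geomSeries_mul hc n 1
    rw [mul_one, coeff_one] at step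
    rw [step]
    by_cases hcn : c ≤ n
    · rw [if_neg (by omega), if_pos hcn, zero_add, ih _ (by omega)]
      exact if_congr (Nat.dvd_sub_iff_left hcn dvd_rfl) rfl rfl
    · rw [if_neg hcn, add_zero]
      refine if_congr ⟨fun h ↦ h ▸ dvd_zero c, fun h ↦ ?_⟩ rfl rfl
      exact Nat.eq_zero_of_dvd_of_lt h (not_le.mp hcn)

lemma coeff_geomSeries_mul_sum_X_pow (hb : 0 < b) (n : ℕ) :
    coeff n (geomSeries b * ∑ j ∈ range b, (X ^ a : ℚ⟦X⟧) ^ j) =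
      #{j ∈ range b | a * j ≤ n ∧ b ∣ n - a * j} := by
  simp only [← pow_mul, mul_sum, map_sum, coeff_mul_X_pow', coeff_geomSeries hb, ite_and,
    card_filter, Nat.cast_sum, Nat.cast_ite, Nat.cast_one, Nat.cast_zero]

lemma card_filter_dvd_sub_mul_le_one (h : Nat.Coprime a b) (n : ℕ) :
    #{j ∈ range b | a * j ≤ n ∧ b ∣ n - a * j} ≤ 1 := by
  refine card_le_one.mpr fun i hi j hj ↦ ?_
  simp only [mem_filter, mem_range] at hi hj
  have modEq : a * i ≡ a * j [MOD b] :=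
    ((Nat.modEq_iff_dvd' hi.2.1).mpr hi.2.2).trans ((Nat.modEq_iff_dvd' hj.2.1).mpr hj.2.2).symm
  exact (modEq.cancel_left_of_coprime h.symm).eq_of_lt_of_lt hi.1 hj.1

lemma one_le_card_filter_dvd_sub_mul (hb : 0 < b) (h : Nat.Coprime a b) {n : ℕ}
    (hn : a * b ≤ n) : 1 ≤ #{j ∈ range b | a * j ≤ n ∧ b ∣ n - a * j} := by
  obtain ⟨j, hjb, hj⟩ := Nat.exists_mul_mod_eq_of_coprime n h hb.ne'
  have le : a * j ≤ n := (Nat.mul_le_mul_left a hjb.le).trans hn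
  exact card_pos.mpr ⟨j, mem_filter.mpr ⟨mem_range.mpr hjb, le, (Nat.modEq_iff_dvd' le).mp hj⟩⟩

lemma geomSeries_mul_geomSeries (ha : 0 < a) (hb : 0 < b) :
    geomSeries a * geomSeries b =
      geomSeries (a * b) * (geomSeries b * ∑ j ∈ range b, (X ^ a) ^ j) := by
  refine eq_geomSeries_mul (Nat.mul_pos ha hb) ?_
  rw [pow_mul, ← mul_neg_geom_sum]
  linear_combination (geomSeries b * ∑ j ∈ range b, (X ^ a : ℚ⟦X⟧) ^ j) *
    one_sub_X_pow_mul_geomSeries ha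

lemma coeff_geomSeries_mul_geomSeries_le (ha : 0 < a) (hb : 0 < b) (h : Nat.Coprime a b) (n : ℕ) :
    coeff n (geomSeries a * geomSeries b) ≤ 1 / (a * b) * (n + a * b) := by
  have hab : (0 : ℚ) < a * b := by positivity
  rw [geomSeries_mul_geomSeries ha hb]
  refine (coeff_geomSeries_mul_le (U := fun n ↦ (n : ℚ) / (a * b)) (Nat.mul_pos ha hb) le_rfl
    (fun i j hij ↦ by dsimp only; gcongr) (by simp) (fun n ↦ ?_) n).trans_eq ?_
  · rw [coeff_geomSeries_mul_sum_X_pow hb, ← sub_div, Nat.cast_add, Nat.cast_mul,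
      add_sub_cancel_left, div_self hab.ne']
    exact_mod_cast card_filter_dvd_sub_mul_le_one h n
  · push_cast
    ring

lemma le_coeff_geomSeries_mul_geomSeries (ha : 0 < a) (hb : 0 < b) (h : Nat.Coprime a b) (n : ℕ) :
    1 / (a * b) * max ((n : ℚ) - a * b) 0 ≤ coeff n (geomSeries a * geomSeries b) := by
  rw [geomSeries_mul_geomSeries ha hb]
  refine le_coeff_geomSeries_mul (U := fun n ↦ 1 / (a * b) * max ((n : ℚ) - a * b) 0)
    (Nat.mul_pos ha hb) (fun n hn ↦ ?_) (fun n ↦ ?_) n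
  · rw [coeff_geomSeries_mul_sum_X_pow hb, max_eq_right (by rw [sub_nonpos]; exact_mod_cast hn.le),
      mul_zero]
    positivity
  · rw [coeff_geomSeries_mul_sum_X_pow hb]
    have one_le : (1 : ℚ) ≤ #{j ∈ range b | a * j ≤ n + a * b ∧ b ∣ n + a * b - a * j} := by
      exact_mod_cast one_le_card_filter_dvd_sub_mul hb h (Nat.le_add_left _ _)
    have step : max (((n + a * b : ℕ) : ℚ) - a * b) 0 - max ((n : ℚ) - a * b) 0 ≤ a * b := by
      push_cast
      rw [add_sub_cancel_right, max_eq_left n.cast_nonneg]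
      linarith [le_max_left ((n : ℚ) - a * b) 0]
    rw [← mul_sub]
    calc 1 / (a * b : ℚ) * _ ≤ 1 / (a * b) * (a * b) := by gcongr
      _ = 1 := by field_simp
      _ ≤ _ := one_le

lemma coeff_geomSeries_mul_le_pow (hc : 0 < c) (hck : c ≤ k) (hM : 0 ≤ M) (hY : 0 ≤ Y)
    (hf : ∀ n, coeff n f ≤ M * (n + Y) ^ d) (n : ℕ) :
    coeff n (geomSeries k * f) ≤ M / ((d + 1) * c) * (n + (Y + c)) ^ (d + 1) := by
  refine (coeff_geomSeries_mul_le (U := fun n ↦ M / ((d + 1) * c) * (n + Y) ^ (d + 1)) hc hck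
    (fun i j hij ↦ by dsimp only; gcongr) (by positivity) (fun n ↦ (hf n).trans ?_) n).trans_eq ?_
  · have bernoulli := pow_add_mul_le_add_pow (a := (n : ℚ) + Y) (b := c) (by positivity)
      (by positivity) (d + 1)
    rw [Nat.add_sub_cancel] at bernoulli
    calc M * (n + Y) ^ d
        = M / ((d + 1) * c) * ((d + 1 : ℕ) * (n + Y) ^ d * c) := by push_cast; field_simp
      _ ≤ M / ((d + 1) * c) * ((n + Y + c) ^ (d + 1) - (n + Y) ^ (d + 1)) := by
          gcongr
          linarith
      _ = _ := by push_cast; ring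
  · push_cast
    ring

lemma max_pow_succ_sub_max_pow_succ_le {t c : ℚ} (hc : 0 ≤ c) (d : ℕ) :
    max (t + c) 0 ^ (d + 1) - max t 0 ^ (d + 1) ≤ (d + 1) * c * max (t + c) 0 ^ d := by
  have step : max (t + c) 0 - c ≤ max t 0 := by
    rcases max_cases (t + c) 0 with h | h <;> linarith [le_max_left t 0, le_max_right t 0]
  have bernoulli := pow_add_mul_le_add_pow (a := max (t + c) 0) (b := max t 0 - max (t + c) 0)
    (le_max_right _ _) (by linarith [le_max_right t 0, le_max_right (t + c) 0]) (d + 1)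
  rw [Nat.add_sub_cancel, add_sub_cancel] at bernoulli
  calc _ ≤ (d + 1 : ℕ) * max (t + c) 0 ^ d * (max (t + c) 0 - max t 0) := by linarith
    _ ≤ (d + 1 : ℕ) * max (t + c) 0 ^ d * c := by
        gcongr
        linarith
    _ = _ := by push_cast; ring

lemma pow_le_coeff_geomSeries_mul (hc : 0 < c) (hM : 0 ≤ M) (hY : 0 ≤ Y)
    (hf : ∀ n : ℕ, M * max (n - Y) 0 ^ d ≤ coeff n f) (n : ℕ) :
    M / ((d + 1) * c) * max (n - Y) 0 ^ (d + 1) ≤ coeff n (geomSeries c * f) := by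
  have hc' : (0 : ℚ) < c := by exact_mod_cast hc
  refine le_coeff_geomSeries_mul (U := fun n ↦ M / ((d + 1) * c) * max (n - Y) 0 ^ (d + 1)) hc
    (fun n hn ↦ le_trans ?_ (hf n)) (fun n ↦ le_trans ?_ (hf (n + c))) n
  · have max_le : max ((n : ℚ) - Y) 0 ≤ (d + 1) * c :=
      calc max ((n : ℚ) - Y) 0 ≤ c :=
            max_le (by linarith [show (n : ℚ) ≤ c by exact_mod_cast hn.le]) hc'.le
        _ ≤ (d + 1) * c := le_mul_of_one_le_left hc'.le (by simp)
    calc M / ((d + 1) * c) * max (n - Y) 0 ^ (d + 1)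
        = M / ((d + 1) * c) * max (n - Y) 0 ^ d * max (n - Y) 0 := by ring
      _ ≤ M / ((d + 1) * c) * max (n - Y) 0 ^ d * ((d + 1) * c) := by gcongr
      _ = M * max (n - Y) 0 ^ d := by field_simp
  · have step := max_pow_succ_sub_max_pow_succ_le (t := n - Y) hc'.le d
    have shift : ((n + c : ℕ) : ℚ) - Y = n - Y + c := by push_cast; ring
    rw [shift, ← mul_sub]
    calc _ ≤ M / ((d + 1) * c) * ((d + 1) * c * max (n - Y + c) 0 ^ d) := by gcongr
      _ = _ := by field_simp

lemma coeff_four_geomSeries_le (ha : 0 < a) (hb : 0 < b) (hab : Nat.Coprime a b) (hc : 0 < c)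
    (hd : 0 < d) (hdk : d ≤ k) (n : ℕ) :
    coeff n (geomSeries k * (geomSeries c * (geomSeries a * geomSeries b))) ≤
      1 / (6 * (a * b * c * d)) * (n + (a * b + c + d)) ^ 3 := by
  have triple (n : ℕ) : coeff n (geomSeries c * (geomSeries a * geomSeries b)) ≤
      1 / (a * b) / (((1 : ℕ) + 1) * c) * (n + (a * b + c)) ^ 2 :=
    coeff_geomSeries_mul_le_pow hc le_rfl (by positivity) (by positivity)
      (fun n ↦ by simpa only [pow_one] using coeff_geomSeries_mul_geomSeries_le ha hb hab n) n
  refine (coeff_geomSeries_mul_le_pow hd hdk (by positivity) (by positivity) triple n).trans_eq ?_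
  push_cast
  field_simp
  ring

lemma le_coeff_four_geomSeries (ha : 0 < a) (hb : 0 < b) (hab : Nat.Coprime a b) (hc : 0 < c)
    (hd : 0 < d) (n : ℕ) :
    1 / (6 * (a * b * c * d)) * max ((n : ℚ) - a * b) 0 ^ 3 ≤
      coeff n (geomSeries d * (geomSeries c * (geomSeries a * geomSeries b))) := by
  have triple (n : ℕ) : 1 / (a * b) / (((1 : ℕ) + 1) * c) * max ((n : ℚ) - a * b) 0 ^ 2 ≤
      coeff n (geomSeries c * (geomSeries a * geomSeries b)) :=
    pow_le_coeff_geomSeries_mul hc (by positivity) (by positivity)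
      (fun n ↦ by simpa only [pow_one] using le_coeff_geomSeries_mul_geomSeries ha hb hab n) n
  refine le_trans (le_of_eq ?_)
    (pow_le_coeff_geomSeries_mul hd (by positivity) (by positivity) triple n)
  push_cast
  field_simp
  ring

/-- The factor `(∑_{j ≥ 1} X^(s j) - ∑_{j ≥ 0} X^(k j)) / ((1 - X^a) (1 - X^b) (1 - X^c))` of the
generating series of the difference of the two counts. -/
noncomputable def differenceFactor (s k a b c : ℕ) : ℚ⟦X⟧ :=
  (geomSeries s - 1 - geomSeries k) * (geomSeries c * (geomSeries a * geomSeries b))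

lemma le_coeff_differenceFactor {s : ℕ} (hs : 0 < s) (hsk : s < k) (ha : 0 < a) (hb : 0 < b)
    (hab : Nat.Coprime a b) (hc : 0 < c) (n : ℕ) :
    1 / (6 * (a * b * c * s * (s + 1))) * ((s + 1) * max ((n : ℚ) - (a * b + s)) 0 ^ 3 -
      s * (n + (a * b + c + (s + 1))) ^ 3) ≤ coeff n (differenceFactor s k a b c) := by
  set T := geomSeries c * (geomSeries a * geomSeries b)
  have upper : coeff n (geomSeries k * T) ≤ _ := coeff_four_geomSeries_le ha hb hab hc
    s.succ_pos hsk n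
  have lower : 1 / (6 * (a * b * c * s)) * max ((n : ℚ) - (a * b + s)) 0 ^ 3 ≤
      coeff n (X ^ s * (geomSeries s * T)) := by
    rw [coeff_X_pow_mul']
    split_ifs with hsn
    · convert le_coeff_four_geomSeries ha hb hab hc hs (n - s) using 4
      push_cast [hsn]
      ring
    · rw [max_eq_right, zero_pow three_ne_zero, mul_zero]
      have : (n : ℚ) ≤ s := by exact_mod_cast (not_le.mp hsn).le
      linarith [show (0 : ℚ) ≤ a * b by positivity]
  have split : differenceFactor s k a b c = X ^ s * (geomSeries s * T) - geomSeries k * T := by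
    rw [differenceFactor]
    linear_combination T * one_sub_X_pow_mul_geomSeries hs
  rw [split, map_sub]
  refine le_trans (le_of_eq ?_) (sub_le_sub lower upper)
  push_cast
  field_simp

end Growth

section Cubic

variable {s w : ℚ}

lemma cubic_le_sub_mul_add_pow_three (hs : 1 ≤ s) (hw : 0 ≤ w) :
    w ^ 3 - 150 * s ^ 3 * w ^ 2 - 7500 * s ^ 6 * w - 125000 * s ^ 9 ≤
      (s + 1) * w ^ 3 - s * (w + 50 * s ^ 2) ^ 3 := by
  have h5 : s ^ 5 ≤ s ^ 6 := pow_le_pow_right₀ hs (by norm_num)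
  have h7 : s ^ 7 ≤ s ^ 9 := pow_le_pow_right₀ hs (by norm_num)
  linarith [mul_le_mul_of_nonneg_right h5 hw]

lemma neg_le_sub_mul_add_pow_three (hs : 1 ≤ s) (hw : 0 ≤ w) :
    -(1500000 * s ^ 9) ≤ (s + 1) * w ^ 3 - s * (w + 50 * s ^ 2) ^ 3 := by
  refine le_trans ?_ (cubic_le_sub_mul_add_pow_three hs hw)
  have hs9 : 0 ≤ s ^ 9 := by positivity
  -- The cubic attains its minimum over `w ≥ 0` near `w = 121 s ^ 3`.
  calc -(1500000 * s ^ 9)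
      ≤ (w - 121 * s ^ 3) ^ 2 * (w + 92 * s ^ 3) + 123 * s ^ 6 * w - 1471972 * s ^ 9 := by
        have : 0 ≤ (w - 121 * s ^ 3) ^ 2 * (w + 92 * s ^ 3) + 123 * s ^ 6 * w := by positivity
        linarith
    _ = _ := by ring

lemma mul_add_lt_sub_mul_add_pow_three (hs : 1 ≤ s) (hw : 1900 * s ^ 5 ≤ w) :
    1500000 * s ^ 9 * (w + 21 * s ^ 2) < (s + 1) * w ^ 3 - s * (w + 50 * s ^ 2) ^ 3 := by
  have hw0 : 0 < w := lt_of_lt_of_le (by positivity) hw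
  have pow_le {i : ℕ} (hi : i ≤ 5) : s ^ i ≤ w / 1900 :=
    (pow_le_pow_right₀ hs hi).trans (by linarith)
  have s_two : s ^ 2 ≤ w / 1900 := pow_le (by norm_num)
  have s_three : s ^ 3 ≤ w / 1900 := pow_le (by norm_num)
  have s_six : s ^ 6 ≤ (w / 1900) ^ 2 := by
    calc s ^ 6 = (s ^ 3) ^ 2 := by ring
      _ ≤ _ := by gcongr
  have s_nine : s ^ 9 ≤ (w / 1900) ^ 2 := by
    calc s ^ 9 = s ^ 4 * s ^ 5 := by ring
      _ ≤ w / 1900 * (w / 1900) := by gcongr <;> exact pow_le (by norm_num)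
      _ = _ := by ring
  have s_nine' : s ^ 9 ≤ (w / 1900) ^ 3 := by
    calc s ^ 9 = (s ^ 3) ^ 3 := by ring
      _ ≤ _ := by gcongr
  calc 1500000 * s ^ 9 * (w + 21 * s ^ 2)
      ≤ 1500000 * (w / 1900) ^ 2 * (w + 21 * (w / 1900)) := by gcongr
    _ < w ^ 3 - 150 * (w / 1900) * w ^ 2 - 7500 * (w / 1900) ^ 2 * w -
        125000 * (w / 1900) ^ 3 := by linarith [pow_pos hw0 3]
    _ ≤ w ^ 3 - 150 * s ^ 3 * w ^ 2 - 7500 * s ^ 6 * w - 125000 * s ^ 9 := by gcongr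
    _ ≤ _ := cubic_le_sub_mul_add_pow_three hs hw0.le

end Cubic

section Difference

variable {s k a b c : ℕ}

lemma cubic_le_coeff_differenceFactor (hs : 0 < s) (hsk : s < k) (ha : 0 < a) (hb : 0 < b)
    (hab : Nat.Coprime a b) (hc : 0 < c) (has : a ≤ s + 3) (hbs : b ≤ s + 4) (hcs : c ≤ s + 4)
    (n : ℕ) :
    1 / (6 * (a * b * c * s * (s + 1))) * ((s + 1) * max ((n : ℚ) - 21 * s ^ 2) 0 ^ 3 -
      s * (max ((n : ℚ) - 21 * s ^ 2) 0 + 50 * s ^ 2) ^ 3) ≤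
      coeff n (differenceFactor s k a b c) := by
  have mul_le : a * b ≤ (s + 3) * (s + 4) := Nat.mul_le_mul has hbs
  have lower_shift : (a * b + s : ℚ) ≤ 21 * s ^ 2 := by
    have : a * b + s ≤ 21 * s ^ 2 := by nlinarith
    exact_mod_cast this
  have upper_shift : (a * b + c + (s + 1) : ℚ) ≤ 29 * s ^ 2 := by
    have : a * b + c + (s + 1) ≤ 29 * s ^ 2 := by nlinarith
    exact_mod_cast this
  refine le_trans ?_ (le_coeff_differenceFactor hs hsk ha hb hab hc n)
  have n_le := le_max_left ((n : ℚ) - 21 * s ^ 2) 0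
  have lower_base : max ((n : ℚ) - 21 * s ^ 2) 0 ≤ max ((n : ℚ) - (a * b + s)) 0 :=
    max_le_max_right 0 (by linarith)
  have upper_base : (n + (a * b + c + (s + 1)) : ℚ) ≤
      max ((n : ℚ) - 21 * s ^ 2) 0 + 50 * s ^ 2 := by linarith
  gcongr

lemma coeff_mul_partitionSeries_difference {A : Finset ℕ} (hs : 0 < s) (hk : 0 < k) (hsA : s ∉ A)
    (hkA : k ∉ A) (n : ℕ) :
    coeff n ((geomSeries s - 1 - geomSeries k) * partitionSeries A) =
      (partitionCount (insert s A) n : ℚ) - partitionCount A n - partitionCount (insert k A) n := by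
  simp only [sub_mul, one_mul, map_sub, ← partitionSeries_insert hs hsA,
    ← partitionSeries_insert hk hkA, coeff_partitionSeries]

lemma coeff_differenceFactor_mul_partitionSeries_pos {R : Finset ℕ} (hs : 0 < s) (hsk : s < k)
    (ha : 0 < a) (hb : 0 < b) (hab : Nat.Coprime a b) (hc : 0 < c) (has : a ≤ s + 3)
    (hbs : b ≤ s + 4) (hcs : c ≤ s + 4) (hR : 0 ∉ R) {N : ℕ} (hN : 5 * 10 ^ 6 * s ^ 10 ≤ N) :
    0 < coeff N (differenceFactor s k a b c * partitionSeries R) := by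
  have one_le : (1 : ℚ) ≤ s := by exact_mod_cast hs
  have cubic_le := cubic_le_coeff_differenceFactor hs hsk ha hb hab hc has hbs hcs
  set θ : ℚ := 1 / (6 * (a * b * c * s * (s + 1)))
  have θ_pos : 0 < θ := by positivity
  refine coeff_mul_partitionSeries_pos (V := 2000 * s ^ 5) (B := θ * (1500000 * s ^ 9)) hR
    (by positivity) ?_ (by positivity) (fun n ↦ ?_) (fun n hn ↦ ?_)
  · calc 2000 * s ^ 5 * (2000 * s ^ 5) + 2000 * s ^ 5
        = 4 * 10 ^ 6 * s ^ 10 + 2000 * s ^ 5 := by ring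
      _ ≤ 4 * 10 ^ 6 * s ^ 10 + 2000 * s ^ 10 := by
          gcongr
          norm_num
      _ ≤ 5 * 10 ^ 6 * s ^ 10 := by omega
      _ ≤ N := hN
  · rw [← mul_neg]
    exact (mul_le_mul_of_nonneg_left (neg_le_sub_mul_add_pow_three one_le (le_max_right _ _))
      θ_pos.le).trans (cubic_le n)
  · have hn' : (2000 * s ^ 5 : ℚ) ≤ n := by exact_mod_cast hn
    have pow_le : (s : ℚ) ^ 2 ≤ s ^ 5 := pow_le_pow_right₀ one_le (by norm_num)
    have s_pos : (0 : ℚ) < s ^ 5 := by positivity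
    have w_ge : 1900 * (s : ℚ) ^ 5 ≤ max ((n : ℚ) - 21 * s ^ 2) 0 :=
      le_max_of_le_left (by linarith)
    have n_le := le_max_left ((n : ℚ) - 21 * s ^ 2) 0
    calc θ * (1500000 * s ^ 9) * n
        = θ * (1500000 * s ^ 9 * n) := mul_assoc _ _ _
      _ ≤ θ * (1500000 * s ^ 9 * (max ((n : ℚ) - 21 * s ^ 2) 0 + 21 * s ^ 2)) := by
          gcongr
          linarith
      _ < _ := mul_lt_mul_of_pos_left (mul_add_lt_sub_mul_add_pow_three one_le w_ge) θ_pos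
      _ ≤ coeff n (differenceFactor s k a b c) := cubic_le n

lemma exists_consecutive_and_third_ne (hsk : s < k) :
    ∃ a c, s < a ∧ a ≤ s + 3 ∧ s < c ∧ c ≤ s + 4 ∧ a ≠ c ∧ a + 1 ≠ c ∧
      a ≠ k ∧ a + 1 ≠ k ∧ c ≠ k := by
  obtain rfl | rfl | rfl | hk : k = s + 1 ∨ k = s + 2 ∨ k = s + 3 ∨ s + 4 ≤ k := by omega
  · exact ⟨s + 2, s + 4, by omega⟩
  · exact ⟨s + 3, s + 1, by omega⟩
  · exact ⟨s + 1, s + 4, by omega⟩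
  · exact ⟨s + 1, s + 3, by omega⟩

lemma partitionCount_add_lt {L N : ℕ} (hs : 0 < s) (hL : 4 ≤ L) (hsk : s < k)
    (hN : 5 * 10 ^ 6 * s ^ 10 ≤ N) :
    partitionCount (insert k ((Icc (s + 1) (L + s)).erase k)) N +
        partitionCount ((Icc (s + 1) (L + s)).erase k) N <
      partitionCount (insert s ((Icc (s + 1) (L + s)).erase k)) N := by
  set A := (Icc (s + 1) (L + s)).erase k with hA
  have mem_A {i : ℕ} : i ∈ A ↔ i ≠ k ∧ s < i ∧ i ≤ L + s := by simp [hA]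
  obtain ⟨a, c, hsa, has, hsc, hcs, hac, hac', hak, hak', hck⟩ :=
    exists_consecutive_and_third_ne hsk
  set R := ((A.erase c).erase a).erase (a + 1) with hR
  have factor : partitionSeries A =
      geomSeries c * (geomSeries a * geomSeries (a + 1)) * partitionSeries R := by
    rw [partitionSeries_eq_geomSeries_mul_erase (i := c) (by omega) (mem_A.mpr (by omega)),
      partitionSeries_eq_geomSeries_mul_erase (i := a) (A := A.erase c) (by omega)
        (by simp only [mem_erase, mem_A]; omega),
      partitionSeries_eq_geomSeries_mul_erase (i := a + 1) (A := (A.erase c).erase a) (by omega)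
        (by simp only [mem_erase, mem_A]; omega)]
    ring
  have positive : 0 < coeff N ((geomSeries s - 1 - geomSeries k) * partitionSeries A) := by
    rw [factor, ← mul_assoc]
    exact coeff_differenceFactor_mul_partitionSeries_pos hs hsk (by omega) a.succ_pos (by simp)
      (by omega) has (by omega) hcs (by simp [hR, mem_A]) hN
  rw [coeff_mul_partitionSeries_difference hs (by omega) (by simp [mem_A]) (by simp [mem_A])]
    at positive
  have : (partitionCount (insert k A) N + partitionCount A N : ℚ) <
      partitionCount (insert s A) N := by linarith
  exact_mod_cast this

lemma card_InD_le_partitionCount (L s k N : ℕ) :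
    Nat.card {p : N.Partition // InD L s p} ≤
      partitionCount (insert k ((Icc (s + 1) (L + s)).erase k)) N := by
  classical
  rw [Nat.card_eq_fintype_card, Fintype.card_subtype, partitionCount]
  refine card_le_card fun p hp ↦ ?_
  simp only [Nat.Partition.restricted, mem_filter, mem_univ, true_and, mem_insert, mem_erase,
    mem_Icc] at hp ⊢
  exact fun i hi ↦ (eq_or_ne i k).imp_right fun hik ↦ ⟨hik, hp.2 i hi⟩

lemma card_InI_add_partitionCount (L : ℕ) (hsk : s < k) (N : ℕ) :
    Nat.card {p : N.Partition // InI L s k p} +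
        partitionCount ((Icc (s + 1) (L + s)).erase k) N =
      partitionCount (insert s ((Icc (s + 1) (L + s)).erase k)) N := by
  classical
  rw [partitionCount_insert (by simp), add_comm, Nat.card_eq_fintype_card, Fintype.card_subtype]
  refine congrArg _ (congrArg card (Finset.ext fun p ↦ ?_))
  simp only [Nat.Partition.restricted, mem_filter, mem_univ, true_and, mem_insert, mem_erase,
    mem_Icc]
  refine ⟨fun ⟨hsp, bounds, hkp⟩ ↦ ⟨fun i hi ↦ ?_, hsp⟩,
    fun ⟨parts, hsp⟩ ↦ ⟨hsp, fun i hi ↦ ?_, fun hkp ↦ ?_⟩⟩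
  · have := bounds i hi
    have : i ≠ k := ne_of_mem_of_not_mem hi hkp
    omega
  · have := parts i hi
    omega
  · have := parts k hkp
    omega

end Difference

section Threshold

variable {s : ℕ}

lemma sq_le_sum_Icc {m p q : ℕ} (hpm : p ≤ m) (hmq : 2 * m ≤ q + 1) :
    m ^ 2 ≤ ∑ i ∈ Icc p q, i := by
  calc m ^ 2 = #(Ico m (2 * m)) * m := by rw [Nat.card_Ico, two_mul, Nat.add_sub_cancel, sq]
    _ ≤ ∑ i ∈ Ico m (2 * m), i := by
        rw [← smul_eq_mul]
        exact card_nsmul_le_sum _ _ _ fun i hi ↦ (mem_Ico.mp hi).1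
    _ ≤ ∑ i ∈ Icc p q, i := sum_le_sum_of_subset fun i hi ↦ by
        rw [mem_Ico] at hi
        rw [mem_Icc]
        omega

lemma lt_Fs'' (hs : 0 < s) : 10 ^ 4 * s ^ 4 < Fs'' s := by
  have hsq : s ≤ s ^ 2 := Nat.le_self_pow two_ne_zero s
  have factor : 100 * s ^ 2 ≤ 120 * s * (s + 1) - 2 := by
    refine Nat.le_sub_of_add_le ?_
    nlinarith
  have factor' : 100 * s ^ 2 ≤ 180 * s * (s + 1) - 3 := by
    refine Nat.le_sub_of_add_le ?_
    nlinarith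
  calc 10 ^ 4 * s ^ 4 = 100 * s ^ 2 * (100 * s ^ 2) := by ring
    _ ≤ (120 * s * (s + 1) - 2) * (180 * s * (s + 1) - 3) := Nat.mul_le_mul factor factor'
    _ < Fs'' s := Nat.lt_add_of_pos_right (by positivity)

lemma pow_ten_le_kappa'' (hs : 0 < s) : 5 * 10 ^ 6 * s ^ 10 ≤ kappa'' s := by
  have hF := lt_Fs'' hs
  have hs4 : s ≤ s ^ 4 := Nat.le_self_pow four_ne_zero s
  have sum_ge : (5000 * s ^ 4) ^ 2 ≤ ∑ i ∈ Icc (s + 1) (Fs'' s - 1), i :=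
    sq_le_sum_Icc (by omega) (by omega)
  have factor : s ^ 2 ≤ 300 * s * (s + 1) - 1 := by
    refine Nat.le_sub_of_add_le ?_
    nlinarith
  calc 5 * 10 ^ 6 * s ^ 10 ≤ s ^ 2 * (5000 * s ^ 4) ^ 2 := by ring_nf; omega
    _ ≤ (300 * s * (s + 1) - 1) * ∑ i ∈ Icc (s + 1) (Fs'' s - 1), i := Nat.mul_le_mul factor sum_ge
    _ ≤ kappa'' s := Nat.le_succ _

end Threshold

theorem stmt_5_general {L s k : ℕ} (hs : 0 < s) (hL : 4 ≤ L) (hk : s + 1 ≤ k) {N : ℕ}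
    (hN : 5 * 10 ^ 6 * s ^ 10 ≤ N) :
    Nat.card {p : N.Partition // InI L s k p} > Nat.card {p : N.Partition // InD L s p} := by
  have counts := partitionCount_add_lt hs hL hk hN
  rw [← card_InI_add_partitionCount L hk N] at counts
  exact (card_InD_le_partitionCount L s k N).trans_lt (Nat.lt_of_add_lt_add_right counts)

theorem stmt_5 (L s k : ℕ) (hs : 0 < s) (hL : 3 * s + 3 ≤ L)
    (hk1 : s + 1 ≤ k) (hk2 : k ≤ 2 * s + 1)
    (N : ℕ) (hN : kappa'' s ≤ N) :
    Nat.card {p : N.Partition // InI L s k p} > Nat.card {p : N.Partition // InD L s p} :=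
  stmt_5_general hs (by omega) hk1 ((pow_ten_le_kappa'' hs).trans hN)
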